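/- arXiv:2405.18791 — 8 statements merged into one kernel-verified Lean document; each statement's English description precedes it below -/
import Mathlib

section
/- Let N ≥ 2 be an integer and let a > 0 and c > 0 be real numbers with a > 2c. If λ ∈ ℂ and ξ : ZMod N → ℂ is not identically zero and they satisfy the linearized optimal-velocity eigen-system λ²·ξ_i = a·(c·(ξ_{i+1} − ξ_i) − λ·ξ_i) for every i ∈ ZMod N, then Re(λ) < 0 or λ = 0. (Linear stability of the optimal velocity model on a ring road under the criterion a > 2V'(h).) -/
/-!
The eigen-system says `a c ξ_{i+1} = w ξ_i` with `w = λ² + a λ + a c`. Summing norms around the ring,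
where the shift permutes the vehicles, gives `|w| = a c`. Writing `λ = x + i y` and `p = x² + a x`,
the equation `|w|² = (a c)²` expands to
`p² + y⁴ + 2 p y² + 2 a c p + a (a - 2 c) y² = 0`.
If `x ≥ 0` then `p ≥ 0`, so with `a > 2 c` every term is nonnegative and hence zero, forcing `λ = 0`.
-/

/-- If the values of a nonzero `ξ` on the cyclic group satisfy `k ξ_{i+1} = w ξ_i`,
then `k` and `w` have the same modulus. -/
lemma norm_eq_of_cyclic_recurrence {N : ℕ} [NeZero N] {k w : ℂ} {ξ : ZMod N → ℂ} (hξ : ξ ≠ 0)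
    (h : ∀ i, k * ξ (i + 1) = w * ξ i) : ‖w‖ = ‖k‖ := by
  have hshift : ∑ i, ‖ξ (i + 1)‖ = ∑ i, ‖ξ i‖ :=
    Equiv.sum_comp (Equiv.addRight (1 : ZMod N)) (fun i => ‖ξ i‖)
  have hpos : 0 < ∑ i, ‖ξ i‖ := by
    obtain ⟨j, hj⟩ := Function.ne_iff.mp hξ
    exact Finset.sum_pos' (fun i _ => norm_nonneg _) ⟨j, Finset.mem_univ j, norm_pos_iff.mpr hj⟩
  have hsum : ‖k‖ * ∑ i, ‖ξ (i + 1)‖ = ‖w‖ * ∑ i, ‖ξ i‖ := by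
    simp only [Finset.mul_sum, ← norm_mul, h]
  rw [hshift] at hsum
  exact (mul_right_cancel₀ hpos.ne' hsum).symm

/-- Linear stability of the optimal velocity model on a ring road under the
criterion `a > 2 V'(h)` (here `c = V'(h)`). -/
theorem ovm_ring_linear_stability
    (N : ℕ) (hN : 2 ≤ N) (a c : ℝ) (ha : 0 < a) (hc : 0 < c) (hac : a > 2 * c)
    (lam : ℂ) (ξ : ZMod N → ℂ) (hξ : ξ ≠ 0)
    (heig : ∀ i : ZMod N,
      lam ^ 2 * ξ i = (a : ℂ) * ((c : ℂ) * (ξ (i + 1) - ξ i) - lam * ξ i)) :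
    lam.re < 0 ∨ lam = 0 := by
  have : NeZero N := ⟨by omega⟩
  have hnorm : ‖lam ^ 2 + a * lam + a * c‖ = ‖(a * c : ℂ)‖ :=
    norm_eq_of_cyclic_recurrence hξ fun i => by linear_combination -heig i
  have hsq : Complex.normSq (lam ^ 2 + a * lam + a * c) = Complex.normSq (a * c : ℂ) := by
    rw [Complex.normSq_eq_norm_sq, Complex.normSq_eq_norm_sq, hnorm]
  rcases lt_or_ge lam.re 0 with hx | hx
  · exact Or.inl hx
  right
  obtain ⟨x, y⟩ := lam
  simp only [Complex.normSq_apply, pow_two, Complex.add_re, Complex.add_im, Complex.mul_re,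
    Complex.mul_im, Complex.ofReal_re, Complex.ofReal_im] at hsq hx
  obtain ⟨p, hp⟩ : ∃ p, p = x ^ 2 + a * x := ⟨_, rfl⟩
  have hp0 : 0 ≤ p := by rw [hp]; positivity
  have key : p ^ 2 + y ^ 4 + 2 * p * y ^ 2 + 2 * (a * c) * p + a * (a - 2 * c) * y ^ 2 = 0 := by
    rw [hp]; linear_combination hsq
  have hd : 0 < a * (a - 2 * c) := mul_pos ha (by linarith)
  have h1 : 0 ≤ 2 * p * y ^ 2 := by positivity
  have h2 : 0 ≤ 2 * (a * c) * p := by positivity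
  have h3 : 0 ≤ a * (a - 2 * c) * y ^ 2 := by positivity
  have hy4 : y ^ 4 = 0 := by nlinarith [sq_nonneg p, sq_nonneg (y ^ 2)]
  have hp2 : p ^ 2 = 0 := by nlinarith [sq_nonneg p, sq_nonneg (y ^ 2)]
  have hpz : p = 0 := pow_eq_zero_iff (by norm_num) |>.mp hp2
  have hy : y = 0 := pow_eq_zero_iff (by norm_num) |>.mp hy4
  have hxz : x = 0 := by
    have : 0 ≤ a * x := by positivity
    have : x ^ 2 = 0 := by nlinarith [sq_nonneg x]
    exact pow_eq_zero_iff (by norm_num) |>.mp this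
  rw [hxz, hy]; rfl
end

section
/- Let a and c be real numbers with 0 < a < 2c. Then there exists N₀ ∈ ℕ such that for every integer N ≥ N₀ there exist λ ∈ ℂ with Re(λ) > 0 and a function ξ : ZMod N → ℂ, not identically zero, satisfying λ²·ξ_i = a·(c·(ξ_{i+1} − ξ_i) − λ·ξ_i) for every i ∈ ZMod N. (Instability of the optimal velocity model for sufficiently many vehicles when a < 2V'(h).) -/
/-!
The Fourier mode `ξ_i = ω ^ i` with `ω = exp (2πi / N)` reduces the system to the quadratic
`λ² + a λ = a c (ω - 1)`. Writing it as `λ² + a λ + (p + q i) = 0` with real `p`, `q`, a root in the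
open right half-plane exists as soon as `a² p < q²` (`exists_root_re_pos`). For `ω = exp (θ i)` this
condition reads `a³ c (1 - cos θ) < a² c² sin² θ`, which for `cos θ < 1` is `a < c (1 + cos θ)`.
As `θ = 2π / N → 0` the right-hand side tends to `2 c > a`, so it holds for all large `N`.
-/

/-- The half of the complex Routh–Hurwitz criterion for quadratics which gives instability. -/
lemma exists_root_re_pos (a p q : ℝ) (ha : 0 < a) (h : a ^ 2 * p < q ^ 2) :
    ∃ z : ℂ, 0 < z.re ∧ z ^ 2 + a * z + (p + q * Complex.I) = 0 := by
  -- The roots are `s - a / 2`, where `s` is a square root of the discriminant over `4`.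
  obtain ⟨s, hs0, hs⟩ : ∃ s : ℂ, 0 ≤ s.re ∧ s ^ 2 = (a : ℂ) ^ 2 / 4 - (p + q * Complex.I) := by
    obtain ⟨s, hs⟩ := IsAlgClosed.exists_pow_nat_eq
      ((a : ℂ) ^ 2 / 4 - (p + q * Complex.I)) (n := 2) two_pos
    rcases le_total 0 s.re with h0 | h0
    · exact ⟨s, h0, hs⟩
    · exact ⟨-s, by simpa using h0, by rw [neg_sq, hs]⟩
  refine ⟨s - ((a / 2 : ℝ) : ℂ), ?_, ?_⟩
  · have hD : (a : ℂ) ^ 2 / 4 - (p + q * Complex.I) = ⟨a ^ 2 / 4 - p, -q⟩ := by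
      apply Complex.ext <;> simp [← Complex.ofReal_pow]
    rw [hD] at hs
    have hre : s.re ^ 2 - s.im ^ 2 = a ^ 2 / 4 - p := by
      have := congrArg Complex.re hs
      simp only [pow_two, Complex.mul_re] at this
      linarith
    have him : 2 * s.re * s.im = -q := by
      have := congrArg Complex.im hs
      simp only [pow_two, Complex.mul_im] at this
      linarith
    rw [Complex.sub_re, Complex.ofReal_re, sub_pos]
    -- If `s.re ≤ a / 2`, then `s.im ^ 2 ≤ p`, hence `q ^ 2 = 4 * s.re ^ 2 * s.im ^ 2 ≤ a ^ 2 * p`.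
    by_contra! hle
    have hu : s.re ^ 2 ≤ a ^ 2 / 4 := by nlinarith
    have hv : s.im ^ 2 ≤ p := by linarith
    have hq : q ^ 2 = 4 * (s.re ^ 2 * s.im ^ 2) := by
      linear_combination (q - 2 * s.re * s.im) * him
    have := mul_le_mul hu hv (sq_nonneg _) (by positivity)
    linarith
  · push_cast
    linear_combination hs

/-- Instability of the optimal velocity model for sufficiently many vehicles
when `a < 2 V'(h)` (here `c = V'(h)`). -/
theorem ovm_ring_instability
    (a c : ℝ) (ha : 0 < a) (hac : a < 2 * c) :
    ∃ N₀ : ℕ, ∀ N : ℕ, N₀ ≤ N →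
      ∃ (lam : ℂ) (ξ : ZMod N → ℂ), 0 < lam.re ∧ ξ ≠ 0 ∧
        ∀ i : ZMod N,
          lam ^ 2 * ξ i = (a : ℂ) * ((c : ℂ) * (ξ (i + 1) - ξ i) - lam * ξ i) := by
  have hc : 0 < c := by linarith
  have hlim : Filter.Tendsto (fun N : ℕ => c * (1 + Real.cos (2 * Real.pi / N)))
      Filter.atTop (nhds (c * (1 + Real.cos 0))) :=
    (((Real.continuous_cos.tendsto 0).comp
      (tendsto_const_div_atTop_nhds_zero_nat (2 * Real.pi))).const_add 1).const_mul c
  have hev := hlim.eventually_const_lt (u := a) (by rw [Real.cos_zero]; linarith)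
  obtain ⟨M, hM⟩ := Filter.eventually_atTop.1 hev
  refine ⟨max M 2, fun N hN => ?_⟩
  have hMN := hM N (le_trans (le_max_left _ _) hN)
  have hN2 : 2 ≤ N := le_trans (le_max_right _ _) hN
  have : NeZero N := ⟨by omega⟩
  set θ : ℝ := 2 * Real.pi / N with hθ
  have hcos : Real.cos θ < 1 := by
    have hN' : (2 : ℝ) ≤ N := by exact_mod_cast hN2
    have hpos : 0 < θ := by positivity
    have hle : θ ≤ Real.pi := by
      rw [hθ, div_le_iff₀ (by linarith)]
      nlinarith [Real.pi_pos]
    simpa using Real.cos_lt_cos_of_nonneg_of_le_pi le_rfl hle hpos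
  have hω : ZMod.stdAddChar (1 : ZMod N) = Real.cos θ + Real.sin θ * Complex.I := by
    have h1 := ZMod.stdAddChar_coe (N := N) 1
    rw [Int.cast_one] at h1
    rw [h1, Complex.ofReal_cos, Complex.ofReal_sin, ← Complex.exp_mul_I]
    congr 1
    rw [hθ]
    push_cast
    ring
  obtain ⟨z, hz, hroot⟩ := exists_root_re_pos a (a * c * (1 - Real.cos θ))
    (-(a * c * Real.sin θ)) ha (by
      have h1 : 0 < a ^ 2 * c * (1 - Real.cos θ) * (c * (1 + Real.cos θ) - a) :=
        mul_pos (mul_pos (by positivity) (by linarith)) (by linarith)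
      have h2 : (-(a * c * Real.sin θ)) ^ 2 = a ^ 2 * c ^ 2 * (1 - Real.cos θ ^ 2) := by
        rw [← Real.sin_sq]; ring
      rw [h2]
      linarith)
  refine ⟨z, fun i => ZMod.stdAddChar i, hz, fun h0 => ?_, fun i => ?_⟩
  · simpa using congrFun h0 0
  · push_cast at hroot hω
    beta_reduce
    rw [AddChar.map_add_eq_mul, hω]
    linear_combination (ZMod.stdAddChar i) * hroot
end

section
/- Let A > 0 be a real number and w ∈ ℂ. Then every complex root z of the quadratic z² + A·z + w = 0 has negative real part if and only if A²·Re(w) > (Im(w))². -/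
/-! For a root `z = x + iy` of `z² + A z + w`, eliminating `w` gives
`A² Re w - (Im w)² = -x (x + A) (A² + 4y²)`, so the inequality holds iff `-A < x < 0`.
The other root is `-A - z`, with real part `-A - x`, so `-A < x < 0` says exactly that
both roots lie in the open left half-plane. -/

theorem hurwitz_discriminant_eq (A : ℝ) (w z : ℂ) (hz : z ^ 2 + (A : ℂ) * z + w = 0) :
    A ^ 2 * w.re - w.im ^ 2 = -(z.re * (z.re + A)) * (A ^ 2 + 4 * z.im ^ 2) := by
  have hw : w = -(z ^ 2 + (A : ℂ) * z) := by linear_combination hz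
  subst hw
  simp [pow_two]
  ring

/-- Hurwitz-type stability criterion for a monic complex quadratic
`z² + A z + w` with positive real linear coefficient `A`. -/
theorem quadratic_hurwitz_criterion (A : ℝ) (hA : 0 < A) (w : ℂ) :
    (∀ z : ℂ, z ^ 2 + (A : ℂ) * z + w = 0 → z.re < 0) ↔
      A ^ 2 * w.re > w.im ^ 2 := by
  constructor
  · intro h
    -- A root exists: complete the square and take a square root of `A² / 4 - w`.
    obtain ⟨s, hs⟩ := IsAlgClosed.exists_pow_nat_eq ((A : ℂ) ^ 2 / 4 - w) (n := 2) (by norm_num)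
    obtain ⟨z, hz⟩ : ∃ z : ℂ, z ^ 2 + (A : ℂ) * z + w = 0 :=
      ⟨s - A / 2, by linear_combination hs⟩
    have h1 := h z hz
    have h2 := h (-A - z) (by linear_combination hz)
    simp only [Complex.sub_re, Complex.neg_re, Complex.ofReal_re] at h2
    have key := hurwitz_discriminant_eq A w z hz
    have h3 : 0 < -(z.re * (z.re + A)) :=
      neg_pos.mpr (mul_neg_of_neg_of_pos h1 (by linarith))
    have h4 : 0 < -(z.re * (z.re + A)) * (A ^ 2 + 4 * z.im ^ 2) := by
      apply mul_pos h3
      positivity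
    linarith
  · intro h z hz
    have key := hurwitz_discriminant_eq A w z hz
    by_contra! hx
    have h4 : 0 ≤ z.re * (z.re + A) * (A ^ 2 + 4 * z.im ^ 2) := by positivity
    linarith
end

section
/- Let a > 0 and c > 0 be real numbers and θ ∈ ℝ. Then every complex root λ of λ² + a·λ − a·c·(e^{iθ} − 1) = 0 has negative real part if and only if −c·cos²θ + a·cosθ + c − a < 0. (Per-mode stability criterion for the linearized optimal velocity model.) -/
/-!
Write the equation as `λ² + a λ + (p + i q) = 0` with `p, q` real; here `p = a c (1 - cos θ)` and
`q = -a c sin θ`. Both roots lie in the open left half-plane iff `q² < a² p` (the Routh–Hurwitz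
condition for a quadratic with complex constant term), and `q² - a² p` is `a² c` times the left-hand
side of the criterion.

If `λ = x + i y` is a root with `x ≥ 0`, then `q² = (2x + a)² y²` and `y² = x² + a x + p`, which
gives `q² ≥ a² p`. Conversely, let `s = u + i v` be a square root of the discriminant. The roots are
`(-a ± s) / 2`, so stability means `|u| < a`, and then
`4 q² = u² v² ≤ a² v² = a² (u² - a² + 4 p) < 4 a² p`.
-/

/-- Routh–Hurwitz condition for a monic quadratic with real linear and complex constant term. -/
lemma roots_re_neg_iff (a p q : ℝ) (ha : 0 < a) (hp : 0 ≤ p) :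
    (∀ z : ℂ, z ^ 2 + (a : ℂ) * z + (p + q * Complex.I) = 0 → z.re < 0) ↔
      q ^ 2 < a ^ 2 * p := by
  constructor
  · intro h
    obtain ⟨s, hs⟩ := IsAlgClosed.exists_pow_nat_eq
      ((a : ℂ) ^ 2 - 4 * (p + q * Complex.I)) (n := 2) (by norm_num)
    have h1 := h ((-a + s) / 2) (by linear_combination hs / 4)
    have h2 := h ((-a - s) / 2) (by linear_combination hs / 4)
    have hre := congrArg Complex.re hs
    have him := congrArg Complex.im hs
    simp [pow_two] at h1 h2 hre him
    have hu : s.re ^ 2 < a ^ 2 := by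
      apply sq_lt_sq' <;> linarith
    have hq : 4 * q ^ 2 = s.re ^ 2 * s.im ^ 2 := by
      have : s.re * s.im = -2 * q := by linarith
      linear_combination (-(s.re * s.im) + 2 * q) * this
    have hv : s.im ^ 2 = s.re ^ 2 - a ^ 2 + 4 * p := by linarith
    have h3 : s.re ^ 2 * s.im ^ 2 ≤ a ^ 2 * s.im ^ 2 := by gcongr
    have h4 : a ^ 2 * s.im ^ 2 < a ^ 2 * (4 * p) := by
      apply mul_lt_mul_of_pos_left _ (by positivity)
      linarith
    linarith
  · intro h z hz
    by_contra! hx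
    have hre := congrArg Complex.re hz
    have him := congrArg Complex.im hz
    simp [pow_two] at hre him
    have hq : q ^ 2 = (2 * z.re + a) ^ 2 * z.im ^ 2 := by
      have : q = -((2 * z.re + a) * z.im) := by linarith
      rw [this]; ring
    have hy : z.im ^ 2 = z.re ^ 2 + a * z.re + p := by linarith
    have : a ^ 2 * p ≤ (2 * z.re + a) ^ 2 * z.im ^ 2 := by
      rw [hy]
      gcongr
      · linarith
      · have : 0 ≤ z.re ^ 2 + a * z.re := by positivity
        linarith
    linarith

/-- Per-mode stability criterion for the linearized optimal velocity model. -/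
theorem ovm_mode_stability_criterion (a c : ℝ) (ha : 0 < a) (hc : 0 < c) (θ : ℝ) :
    (∀ lam : ℂ,
        lam ^ 2 + (a : ℂ) * lam
          - (a : ℂ) * (c : ℂ) * (Complex.exp ((θ : ℂ) * Complex.I) - 1) = 0 →
        lam.re < 0) ↔
      -c * Real.cos θ ^ 2 + a * Real.cos θ + c - a < 0 := by
  have hp : 0 ≤ a * c * (1 - Real.cos θ) :=
    mul_nonneg (by positivity) (by linarith [Real.cos_le_one θ])
  have key := roots_re_neg_iff a (a * c * (1 - Real.cos θ)) (-(a * c * Real.sin θ)) ha hp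
  have hz : ∀ z : ℂ, z ^ 2 + (a : ℂ) * z
      - (a : ℂ) * (c : ℂ) * (Complex.exp ((θ : ℂ) * Complex.I) - 1) =
      z ^ 2 + (a : ℂ) * z + (((a * c * (1 - Real.cos θ) : ℝ) : ℂ)
        + ((-(a * c * Real.sin θ) : ℝ) : ℂ) * Complex.I) := by
    intro z
    rw [Complex.exp_mul_I]
    push_cast
    ring
  simp only [hz]
  rw [key, ← sub_neg]
  have hfac : (-(a * c * Real.sin θ)) ^ 2 - a ^ 2 * (a * c * (1 - Real.cos θ)) =
      (a ^ 2 * c) * (-c * Real.cos θ ^ 2 + a * Real.cos θ + c - a) := by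
    linear_combination (a ^ 2 * c ^ 2) * Real.sin_sq_add_cos_sq θ
  rw [hfac]
  have hac : 0 < a ^ 2 * c := by positivity
  exact ⟨fun h => neg_of_mul_neg_right h hac.le, fun h => mul_neg_of_pos_of_neg hac h⟩
end

section
/- Let a > 0 and c > 0 be real numbers and θ ∈ ℝ. Set d = a² + 4·a·c·cosθ − 4·a·c and e = −4·a·c·sinθ. Then a − √((d + √(d² + e²))/2) > 0 (square roots are real square roots) if and only if −c·cos²θ + a·cosθ + c − a < 0. -/
/-!
Since `a > 0` and `2 * a ^ 2 - d = a ^ 2 + 4 * a * c * (1 - cos θ) > 0`, both square roots can be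
removed by squaring, which turns the condition into `d ^ 2 + e ^ 2 < (2 * a ^ 2 - d) ^ 2`. By
`sin² + cos² = 1`, the difference of the two sides is `16 * a ^ 2 * c` times the trigonometric
expression, so the two have the same sign.
-/

/-- Equivalence between the square-root form of the eigenvalue stability
condition and the trigonometric per-mode condition. -/
theorem ovm_sqrt_condition_iff (a c : ℝ) (ha : 0 < a) (hc : 0 < c) (θ : ℝ)
    (d e : ℝ)
    (hd : d = a ^ 2 + 4 * a * c * Real.cos θ - 4 * a * c)
    (he : e = -(4 * a * c * Real.sin θ)) :
    a - Real.sqrt ((d + Real.sqrt (d ^ 2 + e ^ 2)) / 2) > 0 ↔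
      -c * Real.cos θ ^ 2 + a * Real.cos θ + c - a < 0 := by
  have hpos : 0 < 2 * a ^ 2 - d := by
    have h1 : 0 ≤ a * c * (1 - Real.cos θ) :=
      mul_nonneg (by positivity) (by linarith [Real.cos_le_one θ])
    nlinarith [pow_pos ha 2]
  have key : d ^ 2 + e ^ 2 - (2 * a ^ 2 - d) ^ 2
      = 16 * a ^ 2 * c * (-c * Real.cos θ ^ 2 + a * Real.cos θ + c - a) := by
    rw [hd, he]
    linear_combination 16 * a ^ 2 * c ^ 2 * Real.sin_sq_add_cos_sq θ
  have hk : 0 < 16 * a ^ 2 * c := by positivity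
  -- Both radicals may be squared away, since `a` and `2 * a ^ 2 - d` are positive.
  calc a - Real.sqrt ((d + Real.sqrt (d ^ 2 + e ^ 2)) / 2) > 0
      ↔ (d + Real.sqrt (d ^ 2 + e ^ 2)) / 2 < a ^ 2 := by
        rw [gt_iff_lt, sub_pos, Real.sqrt_lt' ha]
    _ ↔ Real.sqrt (d ^ 2 + e ^ 2) < 2 * a ^ 2 - d := by
        constructor <;> intro h <;> linarith
    _ ↔ d ^ 2 + e ^ 2 - (2 * a ^ 2 - d) ^ 2 < 0 := by
        rw [Real.sqrt_lt' hpos, sub_neg]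
    _ ↔ -c * Real.cos θ ^ 2 + a * Real.cos θ + c - a < 0 := by
        rw [key, ← smul_eq_mul, smul_neg_iff_of_pos_left hk]
end

section
/- Let N ≥ 2 be an integer and let a > 0 and c > 0 be real numbers. Suppose λ ∈ ℂ and ξ_1, …, ξ_N ∈ ℂ are not all zero and satisfy the linearized platoon-controlled eigen-system: λ²·ξ_n = a·(c·(ξ_N − ξ_n)/(N − n) − λ·ξ_n) for every n with 1 ≤ n ≤ N − 1, and λ²·ξ_N = a·(c·(ξ_1 − ξ_N) − λ·ξ_N). Then Re(λ) < 0 or λ = 0. (The platoon-controlled optimal velocity model is always linearly stable, for every sensitivity a > 0.) -/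
/-!
Put `p = λ² + aλ`. With `m = N - n`, the follower equation reads
`(m p + a c) ξ_n = a c ξ_N`, and the leader equation reads `(p + a c) ξ_N = a c ξ_1`.

If `ξ_N = 0`, some follower has `ξ_n ≠ 0`, so `p + a c / m = 0`. If `ξ_N ≠ 0`, eliminating `ξ_1`
between the equations for the leader and for `n = 1` gives `p (m p + a c (m + 1)) = 0` with
`m = N - 1`. Either way `λ² + aλ + k = 0` for some real `k ≥ 0`, and a root of such a quadratic
has negative real part or is zero (`re_neg_or_eq_zero_of_quadratic`).
-/

lemma re_neg_or_eq_zero_of_quadratic {a k : ℝ} (ha : 0 < a) (hk : 0 ≤ k) {z : ℂ}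
    (h : z ^ 2 + a * z + k = 0) : z.re < 0 ∨ z = 0 := by
  by_contra! hcon
  obtain ⟨hre, hz⟩ := hcon
  have h1 := congrArg Complex.re h
  have h2 := congrArg Complex.im h
  simp [pow_two] at h1 h2
  have him : z.im = 0 := by
    have h3 : z.im * (2 * z.re + a) = 0 := by linarith
    rcases mul_eq_zero.mp h3 with h3 | h3
    · exact h3
    · linarith
  have hre0 : z.re = 0 := by
    rw [him] at h1
    have h4 : z.re * (z.re + a) ≤ 0 := by linarith
    by_contra hne
    have hpos : 0 < z.re := lt_of_le_of_ne hre (Ne.symm hne)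
    have : 0 < z.re * (z.re + a) := by positivity
    linarith
  exact hz (Complex.ext hre0 him)

/-- The platoon-controlled optimal velocity model is always linearly stable,
for every sensitivity `a > 0` (here `c = V'(h) > 0`). -/
theorem povm_always_linearly_stable
    (N : ℕ) (hN : 2 ≤ N) (a c : ℝ) (ha : 0 < a) (hc : 0 < c)
    (lam : ℂ) (ξ : ℕ → ℂ)
    (hξ : ∃ n : ℕ, 1 ≤ n ∧ n ≤ N ∧ ξ n ≠ 0)
    (heig : ∀ n : ℕ, 1 ≤ n → n ≤ N - 1 →
      lam ^ 2 * ξ n =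
        (a : ℂ) * ((c : ℂ) * (ξ N - ξ n) / ((N : ℂ) - (n : ℂ)) - lam * ξ n))
    (hlead : lam ^ 2 * ξ N = (a : ℂ) * ((c : ℂ) * (ξ 1 - ξ N) - lam * ξ N)) :
    lam.re < 0 ∨ lam = 0 := by
  -- The follower equations, cleared of denominators.
  have hfol : ∀ n : ℕ, 1 ≤ n → n ≤ N - 1 →
      (((N - n : ℕ) : ℂ) * (lam ^ 2 + a * lam) + a * c) * ξ n = a * c * ξ N := by
    intro n h1 h2
    have hm : (((N - n : ℕ) : ℂ)) ≠ 0 := Nat.cast_ne_zero.mpr (by omega)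
    have h := heig n h1 h2
    rw [← Nat.cast_sub (by omega : n ≤ N)] at h
    field_simp at h
    linear_combination h
  by_cases hNz : ξ N = 0
  · obtain ⟨n, h1, h2, hn⟩ := hξ
    have hnN : n ≠ N := by rintro rfl; exact hn hNz
    have h := hfol n h1 (by omega)
    have hm : (((N - n : ℕ) : ℂ)) ≠ 0 := Nat.cast_ne_zero.mpr (by omega)
    rw [hNz, mul_zero] at h
    have h' := (mul_eq_zero.mp h).resolve_right hn
    refine re_neg_or_eq_zero_of_quadratic (k := a * c / ((N - n : ℕ) : ℝ)) ha (by positivity) ?_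
    push_cast
    field_simp
    linear_combination h'
  · have h := hfol 1 le_rfl (by omega)
    have hm : (((N - 1 : ℕ) : ℂ)) ≠ 0 := Nat.cast_ne_zero.mpr (by omega)
    generalize N - 1 = m at h hm
    have hprod : ((lam ^ 2 + a * lam) * (m * (lam ^ 2 + a * lam) + a * c * (m + 1))) * ξ N = 0 := by
      linear_combination (m * (lam ^ 2 + a * lam) + a * c) * hlead + a * c * h
    rcases mul_eq_zero.mp ((mul_eq_zero.mp hprod).resolve_right hNz) with hp | hp
    · exact re_neg_or_eq_zero_of_quadratic (k := 0) ha le_rfl (by simpa using hp)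
    · refine re_neg_or_eq_zero_of_quadratic (k := a * c * (m + 1) / m) ha (by positivity) ?_
      push_cast
      field_simp
      linear_combination hp
end

section
/- Let a > 0, b > 0, c > 0 be real numbers with (a + b)² > 2·a·c, and let θ ∈ ℝ with cosθ ≠ 1. Then every complex root λ of λ² + (a + b)·λ − a·c·(e^{iθ} − 1) = 0 has negative real part. (Sufficiency of the stability criterion (a+b)²/a > 2V'(h) for the transition phase model.) -/
/-!
Write `lam = x + i y`, `s = a + b`, `k = a c` and `u = 1 - cos θ > 0`. The real and imaginary
parts of the equation are `y² = x² + s x + k u` and `(2 x + s) y = k sin θ`. If `x ≥ 0`, then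
`(2 x + s)² y² ≥ s² k u > 2 k² u`, whereas `(2 x + s)² y² = k² sin² θ = k² u (2 - u) ≤ 2 k² u`,
a contradiction.
-/

/-- Sufficiency of the stability criterion `(a+b)²/a > 2 V'(h)` for the
transition phase model (here `c = V'(h)`). -/
theorem tovm_criterion_sufficient
    (a b c : ℝ) (ha : 0 < a) (hb : 0 < b) (hc : 0 < c)
    (hcrit : (a + b) ^ 2 > 2 * a * c) (θ : ℝ) (hθ : Real.cos θ ≠ 1) :
    ∀ lam : ℂ,
      lam ^ 2 + ((a : ℂ) + (b : ℂ)) * lam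
        - (a : ℂ) * (c : ℂ) * (Complex.exp ((θ : ℂ) * Complex.I) - 1) = 0 →
      lam.re < 0 := by
  intro lam h
  by_contra! hx
  have hre := congrArg Complex.re h
  have him := congrArg Complex.im h
  simp [pow_two, Complex.exp_ofReal_mul_I_re, Complex.exp_ofReal_mul_I_im] at hre him
  have hu : 0 < 1 - Real.cos θ := sub_pos.2 (lt_of_le_of_ne (Real.cos_le_one θ) hθ)
  have hsc := Real.sin_sq_add_cos_sq θ
  generalize Real.cos θ = C at *
  generalize Real.sin θ = S at *
  generalize lam.re = x at *
  generalize lam.im = y at *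
  have hs : 0 < a + b := by positivity
  have hk : 0 < a * c := by positivity
  have hk' : 2 * (a * c) < (a + b) ^ 2 := by linarith
  generalize a + b = s at *
  generalize a * c = k at *
  have hy : y ^ 2 = x ^ 2 + s * x + k * (1 - C) := by linarith
  have hS : (2 * x + s) * y = k * S := by linarith
  have hku : 0 < k * (1 - C) := mul_pos hk hu
  have hlow : s ^ 2 * (k * (1 - C)) ≤ (2 * x + s) ^ 2 * y ^ 2 := by
    have hsx : 0 ≤ s * x := by positivity
    rw [hy]
    gcongr <;> nlinarith
  have hstrict : 2 * k * (k * (1 - C)) < s ^ 2 * (k * (1 - C)) := by gcongr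
  have heq : (2 * x + s) ^ 2 * y ^ 2 = k ^ 2 * (1 - C ^ 2) := by
    rw [← mul_pow, hS, mul_pow, ← hsc]; ring
  nlinarith [sq_nonneg (k * (1 - C))]
end

section
/- Let a > 0, b > 0, c > 0 be real numbers and θ ∈ ℝ. Then every complex root λ of λ² + (a + b)·λ − a·c·(e^{iθ} − 1) = 0 has negative real part if and only if cosθ ≠ 1 and (a + b)² > a·c·(1 + cosθ). (Per-mode stability criterion for the transition phase model.) -/
/-!
Write `p = a + b`, `q = a c (1 - cos θ)`, `r = a c sin θ`, so that the equation is
`λ² + p λ + q - i r = 0` and `r² = q · a c (1 + cos θ)`. The criterion is the Routh–Hurwitz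
condition `0 < q`, `r² < p² q` for this quadratic (`quadratic_stable_iff`).

If a root `x + i y` has `x ≥ 0`, eliminating `y` gives `(x² + p x + q)(2 x + p)² = r²`, whose left
side is at least `q p²`. Conversely the roots are `(-p ± s) / 2` with `s = u + i v` a square root of
the discriminant; stability says `u² < p²`, and then `4 q = p² - u² + v² > 0` and
`4 (p² q - r²) = (p² - u²)(4 q + u²) > 0`.
-/

/-- Routh–Hurwitz criterion for a complex quadratic with real positive linear coefficient. -/
lemma quadratic_stable_iff (p q r : ℝ) (hp : 0 < p) :
    (∀ z : ℂ, z ^ 2 + (p : ℂ) * z + ((q : ℂ) - r * Complex.I) = 0 → z.re < 0) ↔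
      (0 < q ∧ r ^ 2 < p ^ 2 * q) := by
  constructor
  · intro h
    obtain ⟨s, hs⟩ := IsAlgClosed.exists_pow_nat_eq
      ((p : ℂ) ^ 2 - 4 * ((q : ℂ) - r * Complex.I)) (n := 2) (by norm_num)
    have h1 := h ((-p + s) / 2) (by linear_combination hs / 4)
    have h2 := h ((-p - s) / 2) (by linear_combination hs / 4)
    have hre := congrArg Complex.re hs
    have him := congrArg Complex.im hs
    simp [pow_two] at h1 h2 hre him
    obtain ⟨u, v⟩ := s
    simp only at h1 h2 hre him
    have hu : 0 < p ^ 2 - u ^ 2 := by nlinarith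
    have hq : 0 < q := by nlinarith [sq_nonneg v]
    refine ⟨hq, ?_⟩
    have hr : u * v = 2 * r := by linarith
    have key : 4 * (p ^ 2 * q - r ^ 2) = (p ^ 2 - u ^ 2) * (4 * q + u ^ 2) := by
      linear_combination (u * v + 2 * r) * hr + u ^ 2 * hre
    have : 0 < (p ^ 2 - u ^ 2) * (4 * q + u ^ 2) := by positivity
    linarith
  · rintro ⟨hq, hr⟩ ⟨x, y⟩ h
    have hre := congrArg Complex.re h
    have him := congrArg Complex.im h
    simp [pow_two] at hre him
    by_contra! hx
    simp only at hx
    have hy : y * (2 * x + p) = r := by linarith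
    have key : (x ^ 2 + p * x + q) * (2 * x + p) ^ 2 = r ^ 2 := by
      rw [← hy]
      linear_combination (2 * x + p) ^ 2 * hre
    have : q * p ^ 2 ≤ (x ^ 2 + p * x + q) * (2 * x + p) ^ 2 := by
      have : 0 ≤ p * x := by positivity
      gcongr
      · nlinarith
      · linarith
    linarith

/-- Per-mode stability criterion for the transition phase model. -/
theorem tovm_mode_stability_criterion
    (a b c : ℝ) (ha : 0 < a) (hb : 0 < b) (hc : 0 < c) (θ : ℝ) :
    (∀ lam : ℂ,
        lam ^ 2 + ((a : ℂ) + (b : ℂ)) * lam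
          - (a : ℂ) * (c : ℂ) * (Complex.exp ((θ : ℂ) * Complex.I) - 1) = 0 →
        lam.re < 0) ↔
      (Real.cos θ ≠ 1 ∧ (a + b) ^ 2 > a * c * (1 + Real.cos θ)) := by
  have hk : 0 < a * c := by positivity
  have hrq : (a * c * Real.sin θ) ^ 2
      = a * c * (1 + Real.cos θ) * (a * c * (1 - Real.cos θ)) := by
    linear_combination (a * c) ^ 2 * Real.sin_sq_add_cos_sq θ
  have hq : 0 < a * c * (1 - Real.cos θ) ↔ Real.cos θ ≠ 1 := by
    rw [mul_pos_iff_of_pos_left hk, sub_pos]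
    exact (Real.cos_le_one θ).lt_iff_ne
  have main := quadratic_stable_iff (a + b) (a * c * (1 - Real.cos θ)) (a * c * Real.sin θ)
    (by positivity)
  have heq : ∀ z : ℂ, z ^ 2 + ((a : ℂ) + (b : ℂ)) * z
      - (a : ℂ) * (c : ℂ) * (Complex.exp ((θ : ℂ) * Complex.I) - 1)
      = z ^ 2 + ((a + b : ℝ) : ℂ) * z + (((a * c * (1 - Real.cos θ) : ℝ) : ℂ)
        - ((a * c * Real.sin θ : ℝ) : ℂ) * Complex.I) := by
    intro z
    rw [Complex.exp_mul_I]
    push_cast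
    ring
  simp only [heq]
  rw [main, ← hq]
  refine and_congr_right fun h => ?_
  rw [hrq, mul_lt_mul_iff_left₀ h]
end
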